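/- arXiv:math/9602205 — 4 statements merged into one kernel-verified Lean document; each statement's English description precedes it below -/
import Mathlib

section
/- Let X_i (i ∈ ℕ) be finite nonempty sets with weak measures ν_n : P(X_n) → ℕ satisfying Condition 1. Let k ≤ n ∈ ℕ, let T be a nonempty finite tree of sequences t with t(i) ∈ X_i, all of whose maximal elements have length n, such that |root(T)| ≥ k, and let Ψ : Top(T) → {0, 1, …, K_k − 1} be any function. Then there is a nonempty subtree T' ⊆ T such that Top(T') ⊆ Top(T), Ψ is constant on Top(T'), and ν*_{T'}(t) ≥ ν*_T(t) − 1 for every t ∈ nonmax(T'). -/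
open Set List

section Trees

variable {α β : Type*}

/-- `M_n = ∏_{i<n} |X_i|`. -/
def Mfun (X : ℕ → Finset α) (n : ℕ) : ℕ := ∏ i ∈ Finset.range n, (X i).card

/-- `K_n = 2^{n·M_n}`. -/
def Kfun (X : ℕ → Finset α) (n : ℕ) : ℕ := 2 ^ (n * Mfun X n)

/-- A tree over the alphabet sequence `X`: a nonempty set of finite sequences `t` with
`t(i) ∈ X_i`, closed under initial segments. -/
def IsTreeOn (X : ℕ → Finset α) (T : Set (List α)) : Prop :=
  T.Nonempty ∧ (∀ t ∈ T, ∀ i : Fin t.length, t.get i ∈ X i.1) ∧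
    ∀ t ∈ T, ∀ s, s <+: t → s ∈ T

/-- `suc_T(t)`, the set of one-step extensions of `t` in `T`. -/
def sucSet (X : ℕ → Finset α) (T : Set (List α)) (t : List α) : Set α :=
  {x | x ∈ X t.length ∧ t ++ [x] ∈ T}

/-- `ν*_T(t) = ν_{|t|}(suc_T(t))`. -/
def nuStar (X : ℕ → Finset α) (ν : ℕ → Set α → ℕ) (T : Set (List α)) (t : List α) : ℕ :=
  ν t.length (sucSet X T t)

/-- `ν**_T(t) = ν*_T(t) / (M_{|t|})^{|t|²}`. -/
def nuStarStar (X : ℕ → Finset α) (ν : ℕ → Set α → ℕ) (T : Set (List α)) (t : List α) : ℕ :=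
  nuStar X ν T t / (Mfun X t.length) ^ (t.length ^ 2)

/-- Membership in the forcing partial order `ℙ(X)`: an infinite tree in which every node has a
proper extension and for every `n` all but finitely many levels satisfy
`ν*_T(t) > n·(M_{|t|})^{|t|²}`. -/
def MemPP (X : ℕ → Finset α) (ν : ℕ → Set α → ℕ) (T : Set (List α)) : Prop :=
  IsTreeOn X T ∧ (∀ t ∈ T, ∃ x, t ++ [x] ∈ T) ∧
    ∀ n : ℕ, ∃ m : ℕ, ∀ t ∈ T, m < t.length →
      n * (Mfun X t.length) ^ (t.length ^ 2) < nuStar X ν T t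

/-- `smll_n(T)`: the nodes `t⌢⟨x⟩` of `T` with `ν**_T(t) ≤ n`. -/
def smll (X : ℕ → Finset α) (ν : ℕ → Set α → ℕ) (n : ℕ) (T : Set (List α)) :
    Set (List α) :=
  {s | s ∈ T ∧ ∃ t x, s = t ++ [x] ∧ nuStarStar X ν T t ≤ n}

/-- The fusion relation `T ≤_n T'`. -/
def leqN (X : ℕ → Finset α) (ν : ℕ → Set α → ℕ) (n : ℕ) (T T' : Set (List α)) : Prop :=
  T ⊆ T' ∧ smll X ν n T' ⊆ T ∧ ∀ t ∈ T, t ∉ smll X ν n T' → n ≤ nuStar X ν T t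

/-- Condition 1 (weak measures survive finite partitions into `K_n` pieces). -/
def Cond1 (X : ℕ → Finset α) (ν : ℕ → Set α → ℕ) : Prop :=
  ∀ n k : ℕ, ∀ A : Set α, A ⊆ ↑(X n) → k + 1 ≤ ν n A →
    ∀ f : Fin (Kfun X n) → Set α, A = ⋃ i, f i → ∃ i, k ≤ ν n (f i)

/-- The maximal elements of a set of sequences. -/
def topOf (T : Set (List β)) : Set (List β) := {t | t ∈ T ∧ ∀ s ∈ T, t <+: s → s = t}

/-- The non-maximal elements of a set of sequences. -/
def nonmaxOf (T : Set (List β)) : Set (List β) := T \ topOf T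

/-- `r` is the root of `T`: the longest element of `T` comparable with every element of `T`. -/
def isRoot (T : Set (List β)) (r : List β) : Prop :=
  r ∈ T ∧ (∀ s ∈ T, s <+: r ∨ r <+: s) ∧
    ∀ r' ∈ T, (∀ s ∈ T, s <+: r' ∨ r' <+: s) → r' <+: r

/-- The height of a tree: the supremum of the lengths of its elements. -/
noncomputable def hghtOf (T : Set (List β)) : ℕ := sSup (List.length '' T)

/-- `T↾k`, the restriction of a tree to sequences of length at most `k`. -/
def restrOf (T : Set (List β)) (k : ℕ) : Set (List β) := {t | t ∈ T ∧ t.length ≤ k}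

end Trees

theorem hs_Kfun_mono {α : Type*} (X : ℕ → Finset α) (hX : ∀ i, (X i).Nonempty) {k m : ℕ}
    (h : k ≤ m) : Kfun X k ≤ Kfun X m := by
  unfold Kfun
  apply Nat.pow_le_pow_right (by norm_num)
  apply Nat.mul_le_mul h
  unfold Mfun
  apply Finset.prod_le_prod_of_subset_of_one_le'
  · exact Finset.range_mono h
  · intro i _ _
    exact (hX i).card_pos

theorem hs_pigeon {α : Type*} (X : ℕ → Finset α)
    (ν : ℕ → Set α → ℕ) (hC1 : Cond1 X ν) (m K : ℕ) (hK : K ≤ Kfun X m)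
    (A : Set α) (hA : A ⊆ ↑(X m)) (hne : A.Nonempty) (c : α → Fin K) :
    ∃ j, {x | x ∈ A ∧ c x = j}.Nonempty ∧ ν m A - 1 ≤ ν m {x | x ∈ A ∧ c x = j} := by
  classical
  obtain ⟨a, ha⟩ := hne
  rcases Nat.eq_zero_or_pos (ν m A) with h0 | h0
  · exact ⟨c a, ⟨a, ha, rfl⟩, by omega⟩
  let g : Fin (Kfun X m) → Fin K := fun i =>
    if h : i.1 < K then
      (if ({x | x ∈ A ∧ c x = ⟨i.1, h⟩} : Set α).Nonempty then ⟨i.1, h⟩ else c a)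
    else c a
  have hg : ∀ i, ({x | x ∈ A ∧ c x = g i} : Set α).Nonempty := by
    intro i
    by_cases h : i.1 < K
    · by_cases h2 : ({x | x ∈ A ∧ c x = ⟨i.1, h⟩} : Set α).Nonempty
      · have : g i = ⟨i.1, h⟩ := by simp only [g, dif_pos h, if_pos h2]
        rw [this]; exact h2
      · have : g i = c a := by simp only [g, dif_pos h, if_neg h2]
        rw [this]; exact ⟨a, ha, rfl⟩
    · have : g i = c a := by simp only [g, dif_neg h]
      rw [this]; exact ⟨a, ha, rfl⟩
  obtain ⟨i, hi⟩ := hC1 m (ν m A - 1) A hA (by omega) (fun i => {x | x ∈ A ∧ c x = g i}) (by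
    ext x
    simp only [Set.mem_iUnion, Set.mem_setOf_eq]
    constructor
    · intro hx
      refine ⟨⟨(c x).1, lt_of_lt_of_le (c x).2 hK⟩, hx, ?_⟩
      have h2 : ({y | y ∈ A ∧ c y = ⟨(c x).1, (c x).2⟩} : Set α).Nonempty := ⟨x, hx, rfl⟩
      simp only [g, dif_pos (c x).2, if_pos h2]
    · rintro ⟨_, hx, _⟩; exact hx)
  exact ⟨g i, hg i, hi⟩

theorem hs_exists_top {α : Type*} (T : Set (List α)) (hfin : T.Finite) (t : List α) (ht : t ∈ T) :
    ∃ s ∈ topOf T, t <+: s := by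
  obtain ⟨s, ⟨hs, hts⟩, hmax⟩ := Set.exists_max_image {s | s ∈ T ∧ t <+: s} List.length
    (hfin.subset (fun s hs => hs.1)) ⟨t, ht, List.prefix_refl t⟩
  refine ⟨s, ⟨hs, fun u hu hsu => ?_⟩, hts⟩
  exact (hsu.eq_of_length_le (hmax u ⟨hu, hts.trans hsu⟩)).symm

theorem hs_exists_root {α : Type*} (T : Set (List α)) (hfin : T.Finite) (h0 : [] ∈ T) :
    ∃ r, isRoot T r := by
  obtain ⟨r, ⟨hr, hcomp⟩, hmax⟩ := Set.exists_max_image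
    {r | r ∈ T ∧ ∀ s ∈ T, s <+: r ∨ r <+: s} List.length
    (hfin.subset (fun s hs => hs.1)) ⟨[], h0, fun s _ => Or.inr (List.nil_prefix)⟩
  refine ⟨r, hr, hcomp, fun r' hr' hc => ?_⟩
  rcases hcomp r' hr' with h | h
  · exact h
  · rw [h.eq_of_length_le (hmax r' ⟨hr', hc⟩)]

theorem hs_snoc_inj {α : Type*} {t s : List α} {x y : α} (hx : t ++ [x] <+: s)
    (hy : t ++ [y] <+: s) : x = y := by
  have h := (List.prefix_of_prefix_length_le hx hy (by simp)).eq_of_length (by simp)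
  simpa using h

theorem hs_exists_snoc {α : Type*} {t s : List α} (h : t <+: s) (hne : t ≠ s) :
    ∃ x, t ++ [x] <+: s := by
  obtain ⟨u, rfl⟩ := h
  cases u with
  | nil => simp at hne
  | cons x u => exact ⟨x, u, by simp⟩

theorem hs_step {α : Type*} (X : ℕ → Finset α) (hX : ∀ i, (X i).Nonempty)
    (ν : ℕ → Set α → ℕ) (hC1 : Cond1 X ν) (k n : ℕ)
    (T : Set (List α)) (hfin : T.Finite) (htree : IsTreeOn X T)
    (htop : ∀ t ∈ topOf T, t.length = n)
    (hroot : ∀ r, isRoot T r → k ≤ r.length)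
    (Ψ : List α → Fin (Kfun X k)) (d : ℕ) :
    ∀ t ∈ T, t.length + d = n → ∃ (c : Fin (Kfun X k)) (S : Set (List α)), S ⊆ T ∧ t ∈ S ∧
      (∀ s ∈ S, t <+: s) ∧ (∀ s ∈ S, ∀ u, t <+: u → u <+: s → u ∈ S) ∧
      ∀ s ∈ S, (s.length = n ∧ Ψ s = c) ∨
        ((∃ x, s ++ [x] ∈ S) ∧ nuStar X ν T s - 1 ≤ nuStar X ν S s) := by
  classical
  induction d with
  | zero =>
    intro t ht hl
    refine ⟨Ψ t, {t}, by simpa using ht, rfl, ?_, ?_, ?_⟩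
    · rintro s rfl; exact List.prefix_refl _
    · rintro s rfl u h1 h2
      exact h2.eq_of_length_le h1.length_le
    · rintro s rfl; exact Or.inl ⟨by simpa using hl, rfl⟩
  | succ d ih =>
    intro t ht hl
    have hstep : ∀ x, ∃ (c : Fin (Kfun X k)) (S : Set (List α)), x ∈ sucSet X T t → S ⊆ T ∧
        t ++ [x] ∈ S ∧
        (∀ s ∈ S, t ++ [x] <+: s) ∧ (∀ s ∈ S, ∀ u, t ++ [x] <+: u → u <+: s → u ∈ S) ∧
        ∀ s ∈ S, (s.length = n ∧ Ψ s = c) ∨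
          ((∃ y, s ++ [y] ∈ S) ∧ nuStar X ν T s - 1 ≤ nuStar X ν S s) := by
      intro x
      by_cases hx : x ∈ sucSet X T t
      · obtain ⟨c, S, h⟩ := ih (t ++ [x]) hx.2 (by simp; omega)
        exact ⟨c, S, fun _ => h⟩
      · exact ⟨Ψ t, ∅, fun h => absurd h hx⟩
    choose c S hS using hstep
    have hA : sucSet X T t ⊆ ↑(X t.length) := fun x hx => hx.1
    have hmemX : ∀ x, t ++ [x] ∈ T → x ∈ X t.length := by
      intro x hx
      have := htree.2.1 _ hx ⟨t.length, by simp⟩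
      simpa using this
    have hne : (sucSet X T t).Nonempty := by
      obtain ⟨s, hs, hts⟩ := hs_exists_top T hfin t ht
      have : t ≠ s := by
        rintro rfl
        have := htop _ hs
        omega
      obtain ⟨x, hx⟩ := hs_exists_snoc hts this
      have hxT := htree.2.2 s hs.1 _ hx
      exact ⟨x, hmemX x hxT, hxT⟩
    have hj : ∃ j, {x | x ∈ sucSet X T t ∧ c x = j}.Nonempty ∧
        ν t.length (sucSet X T t) - 1 ≤ ν t.length {x | x ∈ sucSet X T t ∧ c x = j} := by
      by_cases hk : k ≤ t.length
      · exact hs_pigeon X ν hC1 t.length _ (hs_Kfun_mono X hX hk) _ hA hne c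
      · obtain ⟨r, hr⟩ := hs_exists_root T hfin (htree.2.2 t ht _ List.nil_prefix)
        have hkr := hroot r hr
        have hpre : ∀ x ∈ sucSet X T t, t ++ [x] <+: r := by
          intro x hx
          rcases hr.2.1 _ hx.2 with h | h
          · exact h
          · rw [h.eq_of_length_le (by simp; omega)]
        obtain ⟨a, ha⟩ := hne
        have : {x | x ∈ sucSet X T t ∧ c x = c a} = sucSet X T t := by
          ext x
          constructor
          · exact fun h => h.1
          · intro hx
            refine ⟨hx, ?_⟩
            rw [hs_snoc_inj (hpre x hx) (hpre a ha)]
        exact ⟨c a, ⟨a, ha, rfl⟩, by rw [this]; omega⟩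
    obtain ⟨j, ⟨b, hb⟩, hν⟩ := hj
    let R : Set (List α) := {s | s = t ∨ ∃ x, (x ∈ sucSet X T t ∧ c x = j) ∧ s ∈ S x}
    have hRt : ∀ y, t ++ [y] ∈ R ↔ (y ∈ sucSet X T t ∧ c y = j) := by
      intro y
      constructor
      · rintro (h | ⟨x, hx, hy⟩)
        · simp at h
        · have := hs_snoc_inj ((hS x hx.1).2.2.1 _ hy) (List.prefix_refl _)
          rw [← this]; exact hx
      · intro hy
        exact Or.inr ⟨y, hy, (hS y hy.1).2.1⟩
    refine ⟨j, R, ?_, Or.inl rfl, ?_, ?_, ?_⟩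
    · rintro s (rfl | ⟨x, hx, hs⟩)
      · exact ht
      · exact (hS x hx.1).1 hs
    · rintro s (rfl | ⟨x, hx, hs⟩)
      · exact List.prefix_refl _
      · exact (List.prefix_append t [x]).trans ((hS x hx.1).2.2.1 s hs)
    · rintro s (rfl | ⟨x, hx, hs⟩) u h1 h2
      · exact Or.inl (h2.eq_of_length_le h1.length_le)
      · by_cases htu : t = u
        · exact Or.inl htu.symm
        · obtain ⟨y, hy⟩ := hs_exists_snoc h1 htu
          have hyx := hs_snoc_inj (hy.trans h2) ((hS x hx.1).2.2.1 s hs)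
          subst hyx
          exact Or.inr ⟨y, hx, (hS y hx.1).2.2.2.1 s hs u hy h2⟩
    · rintro s (rfl | ⟨x, hx, hs⟩)
      · right
        refine ⟨⟨b, (hRt b).2 hb⟩, ?_⟩
        have : sucSet X R s = {x | x ∈ sucSet X T s ∧ c x = j} := by
          ext y
          constructor
          · exact fun h => (hRt y).1 h.2
          · exact fun h => ⟨h.1.1, (hRt y).2 h⟩
        unfold nuStar
        rw [this]; exact hν
      · have hS' := hS x hx.1
        rcases hS'.2.2.2.2 s hs with h | ⟨⟨y, hy⟩, h2⟩
        · left; exact ⟨h.1, h.2.trans hx.2⟩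
        · right
          refine ⟨⟨y, Or.inr ⟨x, hx, hy⟩⟩, ?_⟩
          have hxs := hS'.2.2.1 s hs
          have : sucSet X R s = sucSet X (S x) s := by
            ext z
            constructor
            · rintro ⟨hz, h | ⟨x', hx', hz'⟩⟩
              · have h3 := hxs.length_le
                have h4 := congrArg List.length h
                simp at h3 h4
                omega
              · have := hs_snoc_inj ((hS x' hx'.1).2.2.1 _ hz')
                  (hxs.trans (List.prefix_append s [z]))
                subst this
                exact ⟨hz, hz'⟩
            · exact fun h => ⟨h.1, Or.inr ⟨x, hx, h.2⟩⟩
          unfold nuStar at h2 ⊢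
          rw [this]; exact h2

/-- given Condition 1, any colouring of the top of a finite tree (whose maximal
nodes all have length `n` and whose root has length at least `k ≤ n`) by `K_k` colours admits a
monochromatic subtree losing at most 1 from each weak measure. -/
theorem homogeneous_subtree {α : Type*} (X : ℕ → Finset α) (hX : ∀ i, (X i).Nonempty)
    (ν : ℕ → Set α → ℕ) (hC1 : Cond1 X ν) (k n : ℕ) (hkn : k ≤ n)
    (T : Set (List α)) (hfin : T.Finite) (htree : IsTreeOn X T)
    (htop : ∀ t ∈ topOf T, t.length = n)
    (hroot : ∀ r, isRoot T r → k ≤ r.length)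
    (Ψ : List α → Fin (Kfun X k)) :
    ∃ T' : Set (List α), T' ⊆ T ∧ IsTreeOn X T' ∧ topOf T' ⊆ topOf T ∧
      (∃ c, ∀ t ∈ topOf T', Ψ t = c) ∧
      ∀ t ∈ nonmaxOf T', nuStar X ν T t - 1 ≤ nuStar X ν T' t := by
  have h0 : [] ∈ T := by
    obtain ⟨t, ht⟩ := htree.1
    exact htree.2.2 t ht _ List.nil_prefix
  obtain ⟨c, S, hST, h0S, -, hcl, hS⟩ :=
    hs_step X hX ν hC1 k n T hfin htree htop hroot Ψ n [] h0 (by simp)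
  have hlen : ∀ s ∈ T, s.length = n → s ∈ topOf T := by
    intro s hs hl
    obtain ⟨u, hu, hsu⟩ := hs_exists_top T hfin s hs
    rw [hsu.eq_of_length (by rw [hl, htop u hu])]
    exact hu
  have hlt : ∀ s ∈ topOf S, s.length = n ∧ Ψ s = c := by
    intro s hs
    rcases hS s hs.1 with h | ⟨⟨x, hx⟩, -⟩
    · exact h
    · have := hs.2 _ hx (List.prefix_append s [x])
      simp at this
  refine ⟨S, hST, ⟨⟨[], h0S⟩, fun t ht => htree.2.1 t (hST ht),
    fun t ht s hs => hcl t ht s List.nil_prefix hs⟩,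
    fun s hs => hlen s (hST hs.1) (hlt s hs).1, ⟨c, fun t ht => (hlt t ht).2⟩, ?_⟩
  rintro t ⟨ht, hnt⟩
  rcases hS t ht with h | h
  · exfalso
    apply hnt
    exact ⟨ht, fun s hs hts => (hlen t (hST ht) h.1).2 s (hST hs) hts⟩
  · exact h.2
end

section
/- If 𝒯 is a k-simple tree of trees, then ℛ(k,𝒯) = {R_k(σ) : σ ∈ 𝒯}, with tsuc_{ℛ(k,𝒯)}(R_k(σ)) = tsuc_𝒯(σ)↾k for σ ∈ nonmax(𝒯), is a well-defined tree of trees such that hght*(ℛ(k,𝒯)) ≤ k. -/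
open Set List

section TreesOfTrees

variable {α : Type*}

/-- A tree of trees: a finite tree `nodes` of finite sequences such that the set of immediate
successors of each non-maximal node `σ` is `Top(tsuc σ)` for a specified finite tree `tsuc σ`
which is a finite subtree of some member of `ℙ(X)`. -/
structure TreeOfTrees (X : ℕ → Finset α) (ν : ℕ → Set α → ℕ) where
  nodes : Set (List (List α))
  tsuc : List (List α) → Set (List α)
  nodes_finite : nodes.Finite
  nodes_nonempty : nodes.Nonempty
  nodes_closed : ∀ t ∈ nodes, ∀ s, s <+: t → s ∈ nodes
  tsuc_subtree : ∀ σ ∈ nonmaxOf nodes, ∃ T, MemPP X ν T ∧ tsuc σ ⊆ T ∧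
    (tsuc σ).Finite ∧ (tsuc σ).Nonempty ∧ ∀ t ∈ tsuc σ, ∀ s, s <+: t → s ∈ tsuc σ
  suc_eq : ∀ σ ∈ nonmaxOf nodes, {s | σ ++ [s] ∈ nodes} = topOf (tsuc σ)

variable {X : ℕ → Finset α} {ν : ℕ → Set α → ℕ}

/-- `𝒯 ≺ 𝒮` for trees of trees. -/
def TTprec (T S : TreeOfTrees X ν) : Prop :=
  T.nodes ⊆ S.nodes ∧ topOf T.nodes ⊆ topOf S.nodes ∧
    ∀ σ ∈ nonmaxOf T.nodes, topOf (T.tsuc σ) ⊆ topOf (S.tsuc σ)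

/-- `𝒯 ≺_f 𝒮` for trees of trees. -/
noncomputable def TTprecF (f : ℕ → ℕ → ℕ → ℕ) (T S : TreeOfTrees X ν) : Prop :=
  TTprec T S ∧ ∀ σ ∈ nonmaxOf T.nodes, ∀ t ∈ nonmaxOf (T.tsuc σ),
    nuStar X ν (S.tsuc σ) t - f (hghtOf T.nodes) σ.length t.length ≤
      nuStar X ν (T.tsuc σ) t

/-- `R_k(σ)`, truncating each entry of `σ` to length `k`. -/
def Rfun (k : ℕ) (σ : List (List α)) : List (List α) := σ.map (fun s => s.take k)

/-- A tree of trees is `k`-simple if `tsuc σ ↾ k` depends only on `R_k(σ)`. -/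
def kSimpleTT (k : ℕ) (T : TreeOfTrees X ν) : Prop :=
  ∀ σ ∈ nonmaxOf T.nodes, ∀ σ' ∈ nonmaxOf T.nodes,
    Rfun k σ = Rfun k σ' → restrOf (T.tsuc σ) k = restrOf (T.tsuc σ') k

/-- `hght*(𝒯)`: the maximum of the heights of the trees `tsuc_𝒯(σ)`. -/
noncomputable def hghtStarTT (T : TreeOfTrees X ν) : ℕ :=
  sSup {n | ∃ σ ∈ nonmaxOf T.nodes, n = hghtOf (T.tsuc σ)}

/-- `hght_*(𝒯)`: the minimum of the heights of the trees `tsuc_𝒯(σ)`. -/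
noncomputable def hghtLowTT (T : TreeOfTrees X ν) : ℕ :=
  sInf {n | ∃ σ ∈ nonmaxOf T.nodes, n = hghtOf (T.tsuc σ)}

/-- `sakne_*(𝒯)`: the minimum of the lengths of the roots of the trees `tsuc_𝒯(σ)`. -/
noncomputable def sakneLowTT (T : TreeOfTrees X ν) : ℕ :=
  sInf {n | ∃ σ ∈ nonmaxOf T.nodes, ∃ r, isRoot (T.tsuc σ) r ∧ n = r.length}

/-- `ν_*(𝒯)`: the minimum of `ν**_{tsuc_𝒯(σ)}(t)` over non-maximal `σ` and non-maximal
`t ∈ tsuc_𝒯(σ)` which are not initial segments of the root of `tsuc_𝒯(σ)`. -/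
noncomputable def nuLowTT (T : TreeOfTrees X ν) : ℕ :=
  sInf {q | ∃ σ ∈ nonmaxOf T.nodes, ∃ t ∈ nonmaxOf (T.tsuc σ),
    (∀ r, isRoot (T.tsuc σ) r → ¬ t <+: r) ∧ q = nuStarStar X ν (T.tsuc σ) t}

end TreesOfTrees

theorem exists_top_ext {β : Type*} {T : Set (List β)} (hf : T.Finite) {s : List β} (hs : s ∈ T) :
    ∃ u ∈ topOf T, s <+: u := by
  obtain ⟨u, ⟨hu, hsu⟩, hmax⟩ := Set.exists_max_image {u | u ∈ T ∧ s <+: u} List.length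
    (hf.subset fun u hu => hu.1) ⟨s, hs, List.prefix_rfl⟩
  refine ⟨u, ⟨hu, fun v hv huv => ?_⟩, hsu⟩
  exact (huv.eq_of_length (le_antisymm huv.length_le (hmax v ⟨hv, hsu.trans huv⟩))).symm

theorem top_restr {β : Type*} {T : Set (List β)} (hf : T.Finite)
    (hc : ∀ t ∈ T, ∀ s, s <+: t → s ∈ T) (k : ℕ) :
    topOf (restrOf T k) = (fun u => u.take k) '' topOf T := by
  ext s
  constructor
  · rintro ⟨⟨hs, hk⟩, hmax⟩
    obtain ⟨u, hu, hsu⟩ := exists_top_ext hf hs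
    refine ⟨u, hu, hmax _ ⟨hc u hu.1 _ (List.take_prefix _ _), by simp⟩ ?_⟩
    exact List.prefix_take_iff.2 ⟨hsu, hk⟩
  · rintro ⟨u, hu, rfl⟩
    refine ⟨⟨hc u hu.1 _ (List.take_prefix _ _), by simp⟩, ?_⟩
    rintro v ⟨hv, hvk⟩ huv
    dsimp only at huv ⊢
    by_cases h : u.length ≤ k
    · rw [List.take_of_length_le h] at huv ⊢
      exact hu.2 v hv huv
    · refine (huv.eq_of_length (le_antisymm huv.length_le ?_)).symm
      simp only [List.length_take]
      omega

theorem nonmax_of_append {β : Type*} {T : Set (List β)} (hc : ∀ t ∈ T, ∀ s, s <+: t → s ∈ T)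
    {σ : List β} {s : β} (h : σ ++ [s] ∈ T) : σ ∈ nonmaxOf T := by
  refine ⟨hc _ h _ (List.prefix_append _ _), fun ht => ?_⟩
  have := ht.2 _ h (List.prefix_append _ _)
  simp at this

theorem nonmax_image {α : Type*} {T : Set (List (List α))}
    (hc : ∀ t ∈ T, ∀ s, s <+: t → s ∈ T) (k : ℕ) {ρ : List (List α)}
    (h : ρ ∈ nonmaxOf (Rfun k '' T)) : ∃ σ ∈ nonmaxOf T, Rfun k σ = ρ := by
  obtain ⟨hρ, hnt⟩ := h
  have : ∃ s ∈ Rfun k '' T, ρ <+: s ∧ s ≠ ρ := by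
    by_contra hcon
    push Not at hcon
    exact hnt ⟨hρ, hcon⟩
  obtain ⟨_, ⟨τ, hτ, rfl⟩, hpre, hne⟩ := this
  have heq : Rfun k (τ.take ρ.length) = ρ := by
    have := List.prefix_iff_eq_take.1 hpre
    rw [Rfun, List.map_take]
    exact this.symm
  refine ⟨τ.take ρ.length, ⟨hc _ hτ _ (List.take_prefix _ _), fun ht => ?_⟩, heq⟩
  have := ht.2 τ hτ (List.take_prefix _ _)
  rw [← this] at heq
  exact hne heq

/-- for a `k`-simple tree of trees `𝒯`, the collapse
`ℛ(k,𝒯) = {R_k(σ) : σ ∈ 𝒯}` with `tsuc_{ℛ(k,𝒯)}(R_k(σ)) = tsuc_𝒯(σ)↾k` is a well-defined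
tree of trees with `hght*(ℛ(k,𝒯)) ≤ k`. -/
theorem collapse_is_treeOfTrees {α : Type*} (X : ℕ → Finset α) (hX : ∀ i, (X i).Nonempty)
    (ν : ℕ → Set α → ℕ) (𝒯 : TreeOfTrees X ν) (k : ℕ) (hsim : kSimpleTT k 𝒯) :
    ∃ ℛ : TreeOfTrees X ν,
      ℛ.nodes = Rfun k '' 𝒯.nodes ∧
      (∀ σ ∈ nonmaxOf 𝒯.nodes, ℛ.tsuc (Rfun k σ) = restrOf (𝒯.tsuc σ) k) ∧
      hghtStarTT ℛ ≤ k := by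
  have key : ∀ σ ∈ nonmaxOf 𝒯.nodes,
      {t | ∃ σ' ∈ nonmaxOf 𝒯.nodes, Rfun k σ' = Rfun k σ ∧ t ∈ restrOf (𝒯.tsuc σ') k}
        = restrOf (𝒯.tsuc σ) k := by
    intro σ hσ
    ext t
    constructor
    · rintro ⟨σ', hσ', he, ht⟩
      rw [hsim σ hσ σ' hσ' he.symm]
      exact ht
    · intro ht
      exact ⟨σ, hσ, rfl, ht⟩
  refine ⟨{
    nodes := Rfun k '' 𝒯.nodes
    tsuc := fun ρ => {t | ∃ σ' ∈ nonmaxOf 𝒯.nodes, Rfun k σ' = ρ ∧ t ∈ restrOf (𝒯.tsuc σ') k}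
    nodes_finite := 𝒯.nodes_finite.image _
    nodes_nonempty := 𝒯.nodes_nonempty.image _
    nodes_closed := ?_
    tsuc_subtree := ?_
    suc_eq := ?_ }, rfl, key, ?_⟩
  · rintro _ ⟨τ, hτ, rfl⟩ s hs
    refine ⟨τ.take s.length, 𝒯.nodes_closed _ hτ _ (List.take_prefix _ _), ?_⟩
    rw [Rfun, List.map_take]
    exact (List.prefix_iff_eq_take.1 hs).symm
  · intro ρ hρ
    obtain ⟨σ, hσ, rfl⟩ := nonmax_image 𝒯.nodes_closed k hρ
    rw [key σ hσ]
    obtain ⟨T, hT, hsub, hfin, ⟨t, ht⟩, hc⟩ := 𝒯.tsuc_subtree σ hσ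
    refine ⟨T, hT, fun t ht => hsub ht.1, hfin.subset fun t ht => ht.1,
      ⟨[], hc t ht _ (List.nil_prefix), by simp⟩, ?_⟩
    rintro t ⟨ht, htk⟩ s hs
    exact ⟨hc t ht s hs, hs.length_le.trans htk⟩
  · intro ρ hρ
    obtain ⟨σ, hσ, rfl⟩ := nonmax_image 𝒯.nodes_closed k hρ
    rw [key σ hσ]
    have htop : ∀ τ ∈ nonmaxOf 𝒯.nodes, topOf (restrOf (𝒯.tsuc τ) k)
        = (fun u => u.take k) '' {s | τ ++ [s] ∈ 𝒯.nodes} := by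
      intro τ hτ
      obtain ⟨T, hT, hsub, hfin, hne, hc⟩ := 𝒯.tsuc_subtree τ hτ
      rw [top_restr hfin hc, 𝒯.suc_eq τ hτ]
    ext s
    constructor
    · rintro ⟨τ, hτ, he⟩
      obtain ⟨τ', l, rfl, h1, h2⟩ := List.map_eq_append_iff.1 he
      obtain ⟨u, l', rfl, h3, h4⟩ := List.map_eq_cons_iff.1 h2
      obtain rfl := List.map_eq_nil_iff.1 h4
      have hn := nonmax_of_append 𝒯.nodes_closed hτ
      rw [hsim σ hσ τ' hn h1.symm, htop τ' hn]
      exact ⟨u, hτ, h3⟩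
    · intro hs
      rw [htop σ hσ] at hs
      obtain ⟨u, hu, rfl⟩ := hs
      exact ⟨σ ++ [u], hu, by simp [Rfun]⟩
  · refine csSup_le' ?_
    rintro _ ⟨ρ, hρ, rfl⟩
    refine csSup_le' ?_
    rintro _ ⟨t, ⟨σ, hσ, he, ht⟩, rfl⟩
    exact ht.2
end

section
/- Let m ≥ 1 and let 𝒬_m be the family of m² closed squares [i/m, (i+1)/m] × [j/m, (j+1)/m] for 0 ≤ i, j < m, which covers the unit square [0,1]². If γ is a rectifiable curve in ℝ² (with the Euclidean metric) of length λ(γ) < 1, then the number of squares Q ∈ 𝒬_m with Q ∩ image(γ) ≠ ∅ is at most 5m. -/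
open Set Metric ENNReal

/-- A curve in a metric space: a continuous injective function on `[0,1]`. -/
def IsCurve {X : Type*} [MetricSpace X] (γ : ℝ → X) : Prop :=
  ContinuousOn γ (Set.Icc 0 1) ∧ Set.InjOn γ (Set.Icc 0 1)

/-- The image of a curve. -/
def curveImage {X : Type*} [MetricSpace X] (γ : ℝ → X) : Set X :=
  γ '' Set.Icc 0 1

/-- The length of a curve: the total variation on `[0,1]`. -/
noncomputable def curveLength {X : Type*} [MetricSpace X] (γ : ℝ → X) : ℝ≥0∞ :=
  eVariationOn γ (Set.Icc 0 1)

/-- The length of an arbitrary set: the infimum of lengths of curves whose image contains it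
(`∞` if there is no such curve). -/
noncomputable def setLength {X : Type*} [MetricSpace X] (A : Set X) : ℝ≥0∞ :=
  ⨅ (γ : ℝ → X) (_ : IsCurve γ ∧ A ⊆ curveImage γ), curveLength γ

/-- A metric space is reasonably geodesic if any two points of an open ball are contained in a
short curve inside the ball avoiding any prescribed set of finite length. -/
def ReasonablyGeodesic (Y : Type*) [MetricSpace Y] : Prop :=
  ∀ x y z : Y, ∀ ε : ℝ, 0 < ε → x ∈ Metric.ball z ε → y ∈ Metric.ball z ε →
    ∀ δ : ℝ, 0 < δ → ∀ W : Set Y, setLength W < ⊤ →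
      ∃ γ : ℝ → Y, IsCurve γ ∧ ({x, y} : Set Y) ⊆ curveImage γ ∧
        curveImage γ ⊆ Metric.ball z ε ∧ curveImage γ ∩ W = ∅ ∧
        curveLength γ < ENNReal.ofReal (dist x y + δ)


lemma var_bound (γ : ℝ → EuclideanSpace ℝ (Fin 2)) (hlen : curveLength γ < 1)
    {s t : ℝ} (hs : s ∈ Set.Icc (0:ℝ) 1) (ht : t ∈ Set.Icc (0:ℝ) 1) (hst : s ≤ t) :
    dist (γ s) (γ t) ≤ variationOnFromTo γ (Set.Icc 0 1) 0 t
      - variationOnFromTo γ (Set.Icc 0 1) 0 s := by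
  have hb : eVariationOn γ (Set.Icc 0 1) ≠ ⊤ := (lt_trans hlen ENNReal.one_lt_top).ne
  have hloc : LocallyBoundedVariationOn γ (Set.Icc 0 1) :=
    BoundedVariationOn.locallyBoundedVariationOn hb
  have h0 : (0:ℝ) ∈ Set.Icc (0:ℝ) 1 := by simp
  have hadd := variationOnFromTo.add hloc h0 hs ht
  have h1 : dist (γ s) (γ t) ≤ variationOnFromTo γ (Set.Icc 0 1) s t := by
    rw [variationOnFromTo.eq_of_le _ _ hst, dist_edist]
    apply ENNReal.toReal_mono (hloc s t hs ht)
    exact eVariationOn.edist_le _ ⟨hs, le_refl _, hst⟩ ⟨ht, hst, le_refl _⟩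
  linarith

lemma idx_close {m : ℕ} (hm : 1 ≤ m) {x y : ℝ} {i j : ℕ} (hxy : |x - y| < 1 / m)
    (hx : x ∈ Set.Icc ((i : ℝ) / m) (((i : ℝ) + 1) / m))
    (hy : y ∈ Set.Icc ((j : ℝ) / m) (((j : ℝ) + 1) / m)) (hp : i % 2 = j % 2) : i = j := by
  have hm' : (0:ℝ) < m := by exact_mod_cast hm
  obtain ⟨a, b⟩ := hx
  obtain ⟨c, d⟩ := hy
  rw [abs_lt] at hxy
  obtain ⟨e, f⟩ := hxy
  rw [div_le_iff₀ hm'] at a c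
  rw [le_div_iff₀ hm'] at b d
  have e' : -1 < (x - y) * m := by
    rw [← neg_div, div_lt_iff₀ hm'] at e; exact e
  have f' : (x - y) * m < 1 := by
    rw [lt_div_iff₀ hm'] at f; exact f
  have h1 : (i : ℝ) < j + 2 := by nlinarith
  have h2 : (j : ℝ) < i + 2 := by nlinarith
  have h1' : i < j + 2 := by exact_mod_cast h1
  have h2' : j < i + 2 := by exact_mod_cast h2
  omega

/-- A rectifiable curve in the Euclidean plane of length less than 1 meets at
most `5m` of the `m²` closed grid squares of side `1/m` covering the unit square. -/
theorem curve_meets_few_grid_squares (m : ℕ) (hm : 1 ≤ m)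
    (γ : ℝ → EuclideanSpace ℝ (Fin 2)) (hγ : IsCurve γ) (hlen : curveLength γ < 1) :
    {p : Fin m × Fin m | ∃ z ∈ curveImage γ,
        z 0 ∈ Set.Icc ((p.1 : ℝ) / m) (((p.1 : ℝ) + 1) / m) ∧
        z 1 ∈ Set.Icc ((p.2 : ℝ) / m) (((p.2 : ℝ) + 1) / m)}.ncard ≤ 5 * m := by
  classical
  have hm' : (0:ℝ) < m := by exact_mod_cast hm
  set V : ℝ → ℝ := fun t => variationOnFromTo γ (Set.Icc 0 1) 0 t with hV
  set S := {p : Fin m × Fin m | ∃ z ∈ curveImage γ,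
        z 0 ∈ Set.Icc ((p.1 : ℝ) / m) (((p.1 : ℝ) + 1) / m) ∧
        z 1 ∈ Set.Icc ((p.2 : ℝ) / m) (((p.2 : ℝ) + 1) / m)} with hS
  have hV0 : ∀ t ∈ Set.Icc (0:ℝ) 1, 0 ≤ V t := fun t ht =>
    variationOnFromTo.nonneg_of_le _ _ ht.1
  have hV1 : ∀ t ∈ Set.Icc (0:ℝ) 1, V t < 1 := by
    intro t ht
    simp only [hV]
    rw [variationOnFromTo.eq_of_le _ _ ht.1]
    have h1 : eVariationOn γ (Set.Icc 0 1 ∩ Set.Icc 0 t) < 1 :=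
      lt_of_le_of_lt (eVariationOn.mono _ Set.inter_subset_left) hlen
    have := (ENNReal.toReal_lt_toReal (lt_trans h1 ENNReal.one_lt_top).ne
      ENNReal.one_ne_top).2 h1
    simpa using this
  have hch : ∀ p : Fin m × Fin m, ∃ t : ℝ, p ∈ S → t ∈ Set.Icc (0:ℝ) 1 ∧
      γ t 0 ∈ Set.Icc ((p.1 : ℝ) / m) (((p.1 : ℝ) + 1) / m) ∧
      γ t 1 ∈ Set.Icc ((p.2 : ℝ) / m) (((p.2 : ℝ) + 1) / m) := by
    intro p
    by_cases hp : p ∈ S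
    · obtain ⟨z, ⟨t, ht, rfl⟩, h⟩ := hp
      exact ⟨t, fun _ => ⟨ht, h⟩⟩
    · exact ⟨0, fun h => absurd h hp⟩
  choose T hT using hch
  -- same time slot implies closeness
  have hclose : ∀ s ∈ Set.Icc (0:ℝ) 1, ∀ t ∈ Set.Icc (0:ℝ) 1,
      ⌊V s * m⌋₊ = ⌊V t * m⌋₊ → dist (γ s) (γ t) < 1 / m := by
    have key : ∀ s ∈ Set.Icc (0:ℝ) 1, ∀ t ∈ Set.Icc (0:ℝ) 1, s ≤ t →
      ⌊V s * m⌋₊ = ⌊V t * m⌋₊ → dist (γ s) (γ t) < 1 / m := by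
      intro s hs t ht hst h
      refine lt_of_le_of_lt (var_bound γ hlen hs ht hst) ?_
      change V t - V s < 1 / m
      rw [lt_div_iff₀ hm']
      have h1 := Nat.floor_le (mul_nonneg (hV0 s hs) hm'.le)
      have h2 := Nat.lt_floor_add_one (V t * m)
      rw [h] at h1
      linarith
    intro s hs t ht h
    rcases le_total s t with hst | hst
    · exact key s hs t ht hst h
    · rw [dist_comm]; exact key t ht s hs hst h.symm
  let F : Finset (ℕ × ℕ × ℕ) := Finset.range m ×ˢ Finset.range 2 ×ˢ Finset.range 2
  have hle : S.ncard ≤ (F : Set (ℕ × ℕ × ℕ)).ncard := by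
    refine Set.ncard_le_ncard_of_injOn
      (fun p => (⌊V (T p) * m⌋₊, (p.1 : ℕ) % 2, (p.2 : ℕ) % 2)) ?_ ?_ F.finite_toSet
    · intro p hp
      have ht := (hT p hp).1
      simp only [F, Finset.coe_product, Set.mem_prod, Finset.coe_range, Set.mem_Iio]
      refine ⟨?_, Nat.mod_lt _ two_pos, Nat.mod_lt _ two_pos⟩
      rw [Nat.floor_lt (mul_nonneg (hV0 _ ht) hm'.le)]
      nlinarith [hV1 _ ht]
    · intro p hp q hq hpq
      simp only [Prod.mk.injEq] at hpq
      obtain ⟨h1, h2, h3⟩ := hpq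
      obtain ⟨hp0, hp1, hp2⟩ := hT p hp
      obtain ⟨hq0, hq1, hq2⟩ := hT q hq
      have hd := hclose _ hp0 _ hq0 h1
      have hc : ∀ i, |γ (T p) i - γ (T q) i| < 1 / m := by
        intro i
        refine lt_of_le_of_lt ?_ hd
        rw [dist_eq_norm]
        simpa using PiLp.norm_apply_le (γ (T p) - γ (T q)) i
      exact Prod.ext (Fin.ext (idx_close hm (hc 0) hp1 hq1 h2))
        (Fin.ext (idx_close hm (hc 1) hp2 hq2 h3))
  rw [Set.ncard_coe_finset] at hle
  simp only [F, Finset.card_product, Finset.card_range] at hle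
  omega
end

section
/- Let f, g : ℕ → ℕ satisfy f(0) = 5, g(0) = 1, f(n) ≥ 1, f(n) divides f(n+1), and f(n+1)/f(n)² > 5·g(n+1) for all n. For each n let S_n be a subfamily of the grid 𝒬_{f(n)} with |S_n| < 5·f(n)·g(n). Then there is a nested sequence of squares Q_0 ⊇ Q_1 ⊇ Q_2 ⊇ … with Q_n ∈ 𝒬_{f(n)} \ S_n for every n; in particular there is a point x ∈ [0,1]² such that x does not belong to any square in ⋃_{n∈ℕ} S_n. -/
open Set

/-- The closed square `[i/m,(i+1)/m] × [j/m,(j+1)/m]` of the grid `𝒬_m`. -/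
def gridSq (m i j : ℕ) : Set (ℝ × ℝ) :=
  Set.Icc ((i : ℝ) / m) (((i : ℝ) + 1) / m) ×ˢ Set.Icc ((j : ℝ) / m) (((j : ℝ) + 1) / m)


/-- A finite box with more points than `T` has a point outside `T`. -/
lemma exists_not_mem_of_card {α : Type*} (T : Set α) (hT : T.Finite) (F : Finset α)
    (h : T.ncard < F.card) : ∃ q ∈ F, q ∉ T := by
  by_contra hcon
  push Not at hcon
  have h1 : (F : Set α) ⊆ T := fun q hq => hcon q hq
  have h2 := Set.ncard_le_ncard h1 hT
  rw [Set.ncard_coe_finset] at h2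
  omega

lemma mem_gridSq_iff (m i j : ℕ) (hm : 1 ≤ m) (x : ℝ × ℝ) :
    x ∈ gridSq m i j ↔ ((i : ℝ) ≤ m * x.1 ∧ m * x.1 ≤ i + 1) ∧
      ((j : ℝ) ≤ m * x.2 ∧ m * x.2 ≤ j + 1) := by
  have hm' : (0 : ℝ) < m := by exact_mod_cast hm
  simp only [gridSq, Set.mem_prod, Set.mem_Icc, div_le_iff₀ hm', le_div_iff₀ hm']
  simp only [mul_comm x.1, mul_comm x.2]

/-- `q` is a child of `p` (subdivision factor `k`). -/
def IsChild (k : ℕ) (p q : ℕ × ℕ) : Prop :=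
  (k * p.1 ≤ q.1 ∧ q.1 + 1 ≤ k * p.1 + k) ∧ (k * p.2 ≤ q.2 ∧ q.2 + 1 ≤ k * p.2 + k)

/-- `q` is a child of `p` not touching the boundary of `p`. -/
def IsInner (k : ℕ) (p q : ℕ × ℕ) : Prop :=
  (k * p.1 < q.1 ∧ q.1 + 1 < k * p.1 + k) ∧ (k * p.2 < q.2 ∧ q.2 + 1 < k * p.2 + k)

lemma IsInner.isChild {k : ℕ} {p q : ℕ × ℕ} (h : IsInner k p q) : IsChild k p q := by
  obtain ⟨⟨a, b⟩, c, d⟩ := h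
  exact ⟨⟨a.le, b.le⟩, c.le, d.le⟩

lemma coord_unique {k a b c : ℕ} (h1 : k * a ≤ c) (h2 : c + 1 ≤ k * a + k)
    (h3 : k * b ≤ c) (h4 : c + 1 ≤ k * b + k) : a = b := by
  have e1 : a < b + 1 := by
    apply Nat.lt_of_mul_lt_mul_left (a := k)
    rw [mul_add]; omega
  have e2 : b < a + 1 := by
    apply Nat.lt_of_mul_lt_mul_left (a := k)
    rw [mul_add]; omega
  omega

lemma IsChild.unique {k : ℕ} {p p' q : ℕ × ℕ} (h : IsChild k p q) (h' : IsChild k p' q) :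
    p = p' :=
  Prod.ext (coord_unique h.1.1 h.1.2 h'.1.1 h'.1.2) (coord_unique h.2.1 h.2.2 h'.2.1 h'.2.2)

lemma IsChild.lt {k m : ℕ} {p q : ℕ × ℕ} (h : IsChild k p q) (h1 : p.1 < m) (h2 : p.2 < m) :
    q.1 < m * k ∧ q.2 < m * k := by
  obtain ⟨⟨a, b⟩, c, d⟩ := h
  constructor
  · have := Nat.mul_le_mul_left k (Nat.succ_le_of_lt h1)
    rw [Nat.mul_succ] at this
    rw [mul_comm m k]; omega
  · have := Nat.mul_le_mul_left k (Nat.succ_le_of_lt h2)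
    rw [Nat.mul_succ] at this
    rw [mul_comm m k]; omega

/-- Two good children. -/
lemma exists_two_children (k : ℕ) (p : ℕ × ℕ) (T : Set (ℕ × ℕ)) (hT : T.Finite)
    (h : T.ncard + 1 < k * k) :
    ∃ q q', q ≠ q' ∧ IsChild k p q ∧ IsChild k p q' ∧ q ∉ T ∧ q' ∉ T := by
  set F : Finset (ℕ × ℕ) := Finset.Ico (k * p.1) (k * p.1 + k) ×ˢ Finset.Ico (k * p.2) (k * p.2 + k)
    with hF
  have hc : F.card = k * k := by simp [hF]
  have hm : ∀ q ∈ F, IsChild k p q := by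
    intro q hq
    simp only [hF, Finset.mem_product, Finset.mem_Ico] at hq
    exact ⟨⟨hq.1.1, hq.1.2⟩, hq.2.1, hq.2.2⟩
  obtain ⟨q, hq, hqT⟩ := exists_not_mem_of_card T hT F (by omega)
  obtain ⟨q', hq', hqT'⟩ := exists_not_mem_of_card (insert q T) (hT.insert q) F
    (by have := Set.ncard_insert_le q T; omega)
  simp only [Set.mem_insert_iff, not_or] at hqT'
  exact ⟨q, q', fun e => hqT'.1 e.symm, hm q hq, hm q' hq', hqT, hqT'.2⟩

/-- Among two different squares, one has a good inner child. -/
lemma exists_inner_child (k : ℕ) (p p' : ℕ × ℕ) (hp : p ≠ p') (T : Set (ℕ × ℕ)) (hT : T.Finite)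
    (h : T.ncard < 2 * ((k - 2) * (k - 2))) :
    ∃ q, q ∉ T ∧ (IsInner k p q ∨ IsInner k p' q) := by
  let F : ℕ × ℕ → Finset (ℕ × ℕ) := fun p =>
    Finset.Ico (k * p.1 + 1) (k * p.1 + 1 + (k - 2)) ×ˢ
      Finset.Ico (k * p.2 + 1) (k * p.2 + 1 + (k - 2))
  have hc : ∀ p, (F p).card = (k - 2) * (k - 2) := by intro p; simp [F]
  have hm : ∀ p, ∀ q ∈ F p, IsInner k p q := by
    intro p q hq
    simp only [F, Finset.mem_product, Finset.mem_Ico] at hq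
    refine ⟨⟨?_, ?_⟩, ?_, ?_⟩ <;> omega
  have hd : Disjoint (F p) (F p') := by
    rw [Finset.disjoint_left]
    intro q h1 h2
    exact hp ((hm p q h1).isChild.unique (hm p' q h2).isChild)
  obtain ⟨q, hq, hqT⟩ := exists_not_mem_of_card T hT (F p ∪ F p')
    (by rw [Finset.card_union_of_disjoint hd, hc, hc]; omega)
  refine ⟨q, hqT, ?_⟩
  rcases Finset.mem_union.1 hq with h | h
  · exact Or.inl (hm _ _ h)
  · exact Or.inr (hm _ _ h)

lemma gridSq_subset (m k : ℕ) (hm : 1 ≤ m) (hk : 1 ≤ k) (p q : ℕ × ℕ) (h : IsChild k p q) :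
    gridSq (m * k) q.1 q.2 ⊆ gridSq m p.1 p.2 := by
  intro x hx
  rw [mem_gridSq_iff _ _ _ (Nat.mul_pos hm hk)] at hx
  rw [mem_gridSq_iff _ _ _ hm]
  have hk' : (0 : ℝ) < k := by exact_mod_cast hk
  obtain ⟨⟨a, b⟩, c, d⟩ := h
  have a' : (k : ℝ) * p.1 ≤ q.1 := by exact_mod_cast a
  have b' : (q.1 : ℝ) + 1 ≤ k * p.1 + k := by exact_mod_cast b
  have c' : (k : ℝ) * p.2 ≤ q.2 := by exact_mod_cast c
  have d' : (q.2 : ℝ) + 1 ≤ k * p.2 + k := by exact_mod_cast d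
  push_cast at hx
  obtain ⟨⟨h1, h2⟩, h3, h4⟩ := hx
  refine ⟨⟨?_, ?_⟩, ?_, ?_⟩ <;> apply le_of_mul_le_mul_left _ hk' <;> linarith

/-- The point `x` lies in the open square. -/
def InOpen (m : ℕ) (p : ℕ × ℕ) (x : ℝ × ℝ) : Prop :=
  ((p.1 : ℝ) < m * x.1 ∧ m * x.1 < p.1 + 1) ∧ ((p.2 : ℝ) < m * x.2 ∧ m * x.2 < p.2 + 1)

lemma inOpen_of_inner (m k : ℕ) (hm : 1 ≤ m) (hk : 1 ≤ k) (p q : ℕ × ℕ) (h : IsInner k p q)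
    (x : ℝ × ℝ) (hx : x ∈ gridSq (m * k) q.1 q.2) : InOpen m p x := by
  rw [mem_gridSq_iff _ _ _ (Nat.mul_pos hm hk)] at hx
  have hk' : (0 : ℝ) < k := by exact_mod_cast hk
  obtain ⟨⟨a, b⟩, c, d⟩ := h
  have a' : (k : ℝ) * p.1 < q.1 := by exact_mod_cast a
  have b' : (q.1 : ℝ) + 1 < k * p.1 + k := by exact_mod_cast b
  have c' : (k : ℝ) * p.2 < q.2 := by exact_mod_cast c
  have d' : (q.2 : ℝ) + 1 < k * p.2 + k := by exact_mod_cast d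
  push_cast at hx
  obtain ⟨⟨h1, h2⟩, h3, h4⟩ := hx
  refine ⟨⟨?_, ?_⟩, ?_, ?_⟩ <;> apply lt_of_mul_lt_mul_left _ hk'.le <;> linarith

lemma inOpen_of_child (m k : ℕ) (hk : 1 ≤ k) (p q : ℕ × ℕ) (h : IsChild k p q)
    (x : ℝ × ℝ) (hx : InOpen (m * k) q x) : InOpen m p x := by
  have hk' : (0 : ℝ) < k := by exact_mod_cast hk
  obtain ⟨⟨a, b⟩, c, d⟩ := h
  have a' : (k : ℝ) * p.1 ≤ q.1 := by exact_mod_cast a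
  have b' : (q.1 : ℝ) + 1 ≤ k * p.1 + k := by exact_mod_cast b
  have c' : (k : ℝ) * p.2 ≤ q.2 := by exact_mod_cast c
  have d' : (q.2 : ℝ) + 1 ≤ k * p.2 + k := by exact_mod_cast d
  unfold InOpen at hx
  push_cast at hx
  obtain ⟨⟨h1, h2⟩, h3, h4⟩ := hx
  refine ⟨⟨?_, ?_⟩, ?_, ?_⟩ <;> apply lt_of_mul_lt_mul_left _ hk'.le <;> linarith

lemma eq_of_inOpen (m : ℕ) (hm : 1 ≤ m) (p q : ℕ × ℕ) (x : ℝ × ℝ) (h : InOpen m q x)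
    (hx : x ∈ gridSq m p.1 p.2) : p = q := by
  rw [mem_gridSq_iff _ _ _ hm] at hx
  obtain ⟨⟨h1, h2⟩, h3, h4⟩ := hx
  obtain ⟨⟨g1, g2⟩, g3, g4⟩ := h
  have a1 : p.1 < q.1 + 1 := by exact_mod_cast h1.trans_lt g2
  have a2 : q.1 < p.1 + 1 := by exact_mod_cast g1.trans_le h2
  have a3 : p.2 < q.2 + 1 := by exact_mod_cast h3.trans_lt g4
  have a4 : q.2 < p.2 + 1 := by exact_mod_cast g3.trans_le h4
  exact Prod.ext (by omega) (by omega)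

/-- given grids `𝒬_{f(n)}` with `f` growing fast enough and small families
`S_n ⊆ 𝒬_{f(n)}`, there is a nested sequence of squares `Q_n ∈ 𝒬_{f(n)} \ S_n`; in particular
some point of the unit square avoids all squares in all the `S_n`. -/
theorem exists_nested_squares_avoiding (f g : ℕ → ℕ) (hf0 : f 0 = 5) (hg0 : g 0 = 1)
    (hfpos : ∀ n, 1 ≤ f n) (hdvd : ∀ n, f n ∣ f (n + 1))
    (hgrow : ∀ n, 5 * g (n + 1) * (f n) ^ 2 < f (n + 1))
    (S : ℕ → Set (ℕ × ℕ)) (hS : ∀ n, ∀ p ∈ S n, p.1 < f n ∧ p.2 < f n)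
    (hScard : ∀ n, (S n).ncard < 5 * f n * g n) :
    (∃ Q : ℕ → ℕ × ℕ,
      (∀ n, (Q n).1 < f n ∧ (Q n).2 < f n ∧ Q n ∉ S n) ∧
      (∀ n, gridSq (f (n + 1)) (Q (n + 1)).1 (Q (n + 1)).2 ⊆ gridSq (f n) (Q n).1 (Q n).2)) ∧
    ∃ x ∈ Set.Icc (0 : ℝ) 1 ×ˢ Set.Icc (0 : ℝ) 1,
      ∀ n, ∀ p ∈ S n, x ∉ gridSq (f n) p.1 p.2 := by
  choose k hk using hdvd
  have hfin : ∀ n, (S n).Finite := fun n =>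
    ((Set.finite_Iio (f n)).prod (Set.finite_Iio (f n))).subset fun p hp => hS n p hp
  -- arithmetic
  have hbound : ∀ n, 6 ≤ k n ∧ (S (n + 1)).ncard < k n * (k n - 1) := by
    intro n
    have hs := hScard (n + 1)
    have hg := hgrow n
    have hp := hfpos n
    rw [hk n] at hs hg
    have hg1 : 1 ≤ g (n + 1) := by
      rcases Nat.eq_zero_or_pos (g (n + 1)) with h | h
      · rw [h] at hs; simp at hs
      · exact h
    have hc : 5 * f n * g (n + 1) < k n := by
      apply Nat.lt_of_mul_lt_mul_left (a := f n)
      calc _ = 5 * g (n + 1) * f n ^ 2 := by ring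
        _ < _ := hg
    have hc5 : 5 ≤ 5 * f n * g (n + 1) := by
      have := Nat.mul_le_mul hp hg1
      rw [mul_assoc]; omega
    refine ⟨by omega, ?_⟩
    calc _ < 5 * (f n * k n) * g (n + 1) := hs
      _ = k n * (5 * f n * g (n + 1)) := by ring
      _ ≤ _ := Nat.mul_le_mul_left _ (by omega)
  have hk1 : ∀ n, 1 ≤ k n := fun n => by have := (hbound n).1; omega
  let G : ℕ → ℕ × ℕ → Prop := fun n p => p.1 < f n ∧ p.2 < f n ∧ p ∉ S n
  have hGc : ∀ n p q, G n p → IsChild (k n) p q → q ∉ S (n + 1) → G (n + 1) q := by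
    intro n p q hp hq hqS
    have := hq.lt hp.1 hp.2.1
    rw [← hk n] at this
    exact ⟨this.1, this.2, hqS⟩
  let E : ℕ → ℕ × ℕ → Prop := fun n p =>
    G n p ∧ (Odd n → ∃ q, G (n + 1) q ∧ IsInner (k n) p q)
  have hstep : ∀ n p, E n p →
      ∃ q, E (n + 1) q ∧ IsChild (k n) p q ∧ (Odd n → IsInner (k n) p q) := by
    intro n p ⟨hG, hO⟩
    rcases Nat.even_or_odd n with hn | hn
    · have hno : ¬ Odd n := Nat.not_odd_iff_even.2 hn
      obtain ⟨q, q', hne, hq, hq', hqS, hqS'⟩ := exists_two_children (k n) p (S (n + 1))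
        (hfin _) (by
          obtain ⟨h6, hb⟩ := hbound n
          obtain ⟨t, ht⟩ := Nat.exists_eq_add_of_le h6
          rw [ht] at hb ⊢
          rw [show 6 + t - 1 = 5 + t by omega] at hb
          nlinarith)
      obtain ⟨r, hr, hor⟩ := exists_inner_child (k (n + 1)) q q' hne (S (n + 2)) (hfin _) (by
          obtain ⟨h6, hb⟩ := hbound (n + 1)
          obtain ⟨t, ht⟩ := Nat.exists_eq_add_of_le h6
          rw [ht] at hb ⊢
          rw [show 6 + t - 1 = 5 + t by omega] at hb
          rw [show 6 + t - 2 = 4 + t by omega]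
          nlinarith)
      have g1 := hGc n p q hG hq hqS
      have g2 := hGc n p q' hG hq' hqS'
      rcases hor with h | h
      · exact ⟨q, ⟨g1, fun _ => ⟨r, hGc _ _ _ g1 h.isChild hr, h⟩⟩, hq, fun h => absurd h hno⟩
      · exact ⟨q', ⟨g2, fun _ => ⟨r, hGc _ _ _ g2 h.isChild hr, h⟩⟩, hq', fun h => absurd h hno⟩
    · obtain ⟨q, hq, hi⟩ := hO hn
      refine ⟨q, ⟨hq, fun h => ?_⟩, hi.isChild, fun _ => hi⟩
      exact absurd h (Nat.not_odd_iff_even.2 hn.add_one)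
  obtain ⟨p0, hp0⟩ : ∃ p, E 0 p := by
    obtain ⟨q, hq, hqS⟩ := exists_not_mem_of_card (S 0) (hfin 0)
      (Finset.range 5 ×ˢ Finset.range 5) (by
        have := hScard 0
        rw [hf0, hg0] at this
        simpa using this)
    simp only [Finset.mem_product, Finset.mem_range] at hq
    exact ⟨q, ⟨by rw [hf0]; exact hq.1, by rw [hf0]; exact hq.2, hqS⟩, fun h => by simp at h⟩
  choose! nx hnx using hstep
  let Q : ℕ → ℕ × ℕ := fun n => Nat.rec p0 (fun n p => nx n p) n
  have hQs : ∀ n, Q (n + 1) = nx n (Q n) := fun n => rfl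
  have hE : ∀ n, E n (Q n) := by
    intro n
    induction n with
    | zero => exact hp0
    | succ n ih => rw [hQs]; exact (hnx n _ ih).1
  have hC : ∀ n, IsChild (k n) (Q n) (Q (n + 1)) := fun n => (hnx n _ (hE n)).2.1
  have hI : ∀ n, Odd n → IsInner (k n) (Q n) (Q (n + 1)) := fun n => (hnx n _ (hE n)).2.2
  have hsub : ∀ n, gridSq (f (n + 1)) (Q (n + 1)).1 (Q (n + 1)).2 ⊆
      gridSq (f n) (Q n).1 (Q n).2 := by
    intro n
    rw [hk n]
    exact gridSq_subset _ _ (hfpos n) (hk1 n) _ _ (hC n)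
  refine ⟨⟨Q, fun n => (hE n).1, hsub⟩, ?_⟩
  have hcomp : ∀ n, IsCompact (gridSq (f n) (Q n).1 (Q n).2) := fun n =>
    isCompact_Icc.prod isCompact_Icc
  obtain ⟨x, hx⟩ := IsCompact.nonempty_iInter_of_sequence_nonempty_isCompact_isClosed
    (fun n => gridSq (f n) (Q n).1 (Q n).2) hsub
    (fun n => by
      refine Set.Nonempty.prod ?_ ?_ <;> rw [Set.nonempty_Icc] <;> gcongr <;> linarith)
    (hcomp 0) (fun n => (hcomp n).isClosed)
  rw [Set.mem_iInter] at hx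
  have hodd : ∀ n, Odd n → InOpen (f n) (Q n) x := by
    intro n hn
    have h := hx (n + 1)
    simp only [hk n] at h
    exact inOpen_of_inner _ _ (hfpos n) (hk1 n) _ _ (hI n hn) x h
  have hopen : ∀ n, InOpen (f n) (Q n) x := by
    intro n
    rcases Nat.even_or_odd n with hn | hn
    · have h := hodd (n + 1) hn.add_one
      rw [hk n] at h
      exact inOpen_of_child _ _ (hk1 n) _ _ (hC n) x h
    · exact hodd n hn
  refine ⟨x, ?_, ?_⟩
  · obtain ⟨⟨h1, h2⟩, h3, h4⟩ := hopen 0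
    obtain ⟨⟨l1, l2, -⟩, -⟩ := hE 0
    rw [hf0] at h1 h2 h3 h4 l1 l2
    have e1 : ((Q 0).1 : ℝ) + 1 ≤ 5 := by exact_mod_cast l1
    have e2 : ((Q 0).2 : ℝ) + 1 ≤ 5 := by exact_mod_cast l2
    have e3 : (0 : ℝ) ≤ (Q 0).1 := Nat.cast_nonneg _
    have e4 : (0 : ℝ) ≤ (Q 0).2 := Nat.cast_nonneg _
    push_cast at h1 h2 h3 h4
    refine ⟨⟨?_, ?_⟩, ?_, ?_⟩ <;> linarith
  · intro n p hp hxp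
    have := eq_of_inOpen (f n) (hfpos n) p (Q n) x (hopen n) hxp
    exact (hE n).1.2.2 (this ▸ hp)
end
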